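/- arXiv:2508.18997 — 4 statements merged into one kernel-verified Lean document; each statement's English description precedes it below -/
import Mathlib

section
/- Let (T,𝒯,μ) be a complete finite measure space, Y a separable Banach space, and Z a complete separable metric space. Let Ψ: T×Z → 2^Y be a convex-valued (possibly empty-valued) correspondence that is jointly lower measurable and such that Ψ(t,·): Z → 2^Y is lower-semicontinuous for every t ∈ T. Assume at least one of the following holds: Y is finite-dimensional; Ψ is closed-valued; or int Ψ(t,x) ≠ ∅ for all (t,x) ∈ U_Ψ. Then there exists a Carathéodory-type selection ψ: U_Ψ → Y of the restriction of Ψ to U_Ψ. -/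
open MeasureTheory Set TopologicalSpace

noncomputable section

/-- A correspondence `Φ : Z → 2^Y` is lower-semicontinuous if `{x | Φ x ∩ V ≠ ∅}` is open
for every open `V ⊆ Y`. -/
def LSCCorr {Z Y : Type*} [TopologicalSpace Z] [TopologicalSpace Y] (Φ : Z → Set Y) : Prop :=
  ∀ V : Set Y, IsOpen V → IsOpen {x : Z | (Φ x ∩ V).Nonempty}

/-- Lower semicontinuity of the restriction of a correspondence to a subset `O`
(with the subspace topology). -/
def LSCCorrOn {Z Y : Type*} [TopologicalSpace Z] [TopologicalSpace Y] (Φ : Z → Set Y)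
    (O : Set Z) : Prop :=
  ∀ V : Set Y, IsOpen V → IsOpen {x : O | (Φ (x : Z) ∩ V).Nonempty}

/-- A correspondence `Φ : Z → 2^Y` is upper-semicontinuous if `{x | Φ x ⊆ V}` is open
for every open `V ⊆ Y`. -/
def USCCorr {Z Y : Type*} [TopologicalSpace Z] [TopologicalSpace Y] (Φ : Z → Set Y) : Prop :=
  ∀ V : Set Y, IsOpen V → IsOpen {x : Z | Φ x ⊆ V}

/-- A correspondence `Φ : T → 2^Y` is lower measurable if `{t | Φ t ∩ V ≠ ∅}` is measurable
for every open `V ⊆ Y`. -/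
def LowerMeasCorr {T Y : Type*} [MeasurableSpace T] [TopologicalSpace Y] (Φ : T → Set Y) : Prop :=
  ∀ V : Set Y, IsOpen V → MeasurableSet {t : T | (Φ t ∩ V).Nonempty}

/-- A correspondence `Φ : T × Z → 2^Y` is jointly lower measurable if
`{(t,x) | Φ t x ∩ V ≠ ∅}` is product-measurable for every open `V ⊆ Y`. -/
def JLowerMeas {T Z Y : Type*} [MeasurableSpace T] [MeasurableSpace Z] [TopologicalSpace Y]
    (Φ : T → Z → Set Y) : Prop :=
  ∀ V : Set Y, IsOpen V → MeasurableSet {p : T × Z | (Φ p.1 p.2 ∩ V).Nonempty}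

/-- `F, O` witness the continuous inclusion property for `Ψ`. -/
def CIPWitness {T Z Y : Type*} [MeasurableSpace T] [TopologicalSpace Z]
    [NormedAddCommGroup Y] [NormedSpace ℝ Y]
    (Ψ : T → Z → Set Y) (F : Z → T → Z → Set Y) (O : Z → T → Set Z) : Prop :=
  (∀ z t, (Ψ t z).Nonempty →
      IsOpen (O z t) ∧ z ∈ O z t ∧ ∀ x ∈ O z t, (F z t x).Nonempty ∧ F z t x ⊆ Ψ t x) ∧
  (∀ z t, (Ψ t z).Nonempty → LSCCorrOn (fun x => convexHull ℝ (F z t x)) (O z t)) ∧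
  (∀ z t, ¬(Ψ t z).Nonempty → LSCCorr fun x => convexHull ℝ (F z t x))

/-- The continuous inclusion property. -/
def ContinuousInclusion {T Z Y : Type*} [MeasurableSpace T] [TopologicalSpace Z]
    [NormedAddCommGroup Y] [NormedSpace ℝ Y] (Ψ : T → Z → Set Y) : Prop :=
  ∃ F O, CIPWitness Ψ F O

/-- `F, O` witness the strong continuous inclusion property for `Ψ`. -/
def SCIPWitness {T Z Y : Type*} [MeasurableSpace T] [TopologicalSpace Z] [MeasurableSpace Z]
    [NormedAddCommGroup Y] [NormedSpace ℝ Y]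
    (Ψ : T → Z → Set Y) (F : Z → T → Z → Set Y) (O : Z → T → Set Z) : Prop :=
  CIPWitness Ψ F O ∧
  (∀ z, JLowerMeas fun t x => convexHull ℝ (F z t x)) ∧
  ((∀ y z, F y = F z) ∨
    ((Set.range F).Countable ∧
      {s : Set Z | ∃ t z, (Ψ t z).Nonempty ∧ s = O z t}.Countable ∧
      ∀ z, MeasurableSet {p : T × Z | p.2 ∈ O z p.1}) ∨
    (MeasurableSet {p : T × Z | (Ψ p.1 p.2).Nonempty} ∧
      JLowerMeas (fun t x => {z : Z | (Ψ t z).Nonempty ∧ x ∈ O z t}) ∧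
      (∀ t x, {z : Z | (Ψ t z).Nonempty ∧ x ∈ O z t}.Finite) ∧
      ∀ t x, ∃ B : Set Y, IsCompact B ∧
        LSCCorr (fun z => convexHull ℝ (F z t x)) ∧
        USCCorr (fun z => convexHull ℝ (F z t x)) ∧
        ∀ z, convexHull ℝ (F z t x) ⊆ B))

/-- The strong continuous inclusion property. -/
def StrongContinuousInclusion {T Z Y : Type*} [MeasurableSpace T] [TopologicalSpace Z]
    [MeasurableSpace Z] [NormedAddCommGroup Y] [NormedSpace ℝ Y] (Ψ : T → Z → Set Y) : Prop :=
  ∃ F O, SCIPWitness Ψ F O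

/-- The operator `𝕂(Ψ)(t,x) = ⋃ {int F_z(t,x) : Ψ(t,z) ≠ ∅ and x ∈ O_z^t}`. -/
def Kmap {T Z Y : Type*} [TopologicalSpace Y]
    (Ψ : T → Z → Set Y) (F : Z → T → Z → Set Y) (O : Z → T → Set Z)
    (t : T) (x : Z) : Set Y :=
  ⋃ z ∈ {z : Z | (Ψ t z).Nonempty ∧ x ∈ O z t}, interior (F z t x)

/-- `A` is an atom of the measure `μ`. -/
def IsMeasAtom {T : Type*} [MeasurableSpace T] (μ : Measure T) (A : Set T) : Prop :=
  MeasurableSet A ∧ μ A ≠ 0 ∧ ∀ B ⊆ A, MeasurableSet B → μ B = 0 ∨ μ (A \ B) = 0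

/-- The measure space is (purely) atomic: it is the union of countably many atoms. -/
def IsAtomicMeasure {T : Type*} [MeasurableSpace T] (μ : Measure T) : Prop :=
  ∃ S : Set (Set T), S.Countable ∧ (∀ A ∈ S, IsMeasAtom μ A) ∧ ⋃₀ S = Set.univ

/-- `ψ` is a Carathéodory-type selection of `Ψ` on `U_Ψ`: it selects from `Ψ` on `U_Ψ`,
is measurable in `t` on each section `U_Ψ^x` and continuous in `x` on each section `U_Ψ^t`. -/
def CaraSelection {T Z Y : Type*} [MeasurableSpace T] [TopologicalSpace Z]
    [TopologicalSpace Y] [MeasurableSpace Y]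
    (Ψ : T → Z → Set Y) (ψ : T → Z → Y) : Prop :=
  (∀ t x, (Ψ t x).Nonempty → ψ t x ∈ Ψ t x) ∧
  (∀ x : Z, Measurable fun t : {t : T // (Ψ t x).Nonempty} => ψ t.1 x) ∧
  (∀ t : T, Continuous fun x : {x : Z // (Ψ t x).Nonempty} => ψ t x.1)

/-!
Give `T` the pseudometrizable topology generated by the countably many sets
`{t | ∀ x ∈ B, Ψ t x ∩ V ≠ ∅}`, with `B` and `V` basic open sets of `Z` and `Y`. They are measurable
by the projection theorem for complete measures, and for this topology `Ψ` is jointly lower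
hemicontinuous, so a continuous selection of `Ψ` on `U_Ψ ⊆ T × Z` in the sense of Michael is already
of Carathéodory type. When the values are not closed, average a dense sequence of continuous
selections of the closures with positive weights: such an average avoids every proper closed extreme
subset of the closure, and each of the three assumptions forces the points of the closure missing
from `Ψ t x` to lie in subsets of this kind.
-/

open Filter Topology

section MichaelConvex

variable {ι E : Type*} [AddCommGroup E] [Module ℝ E] [TopologicalSpace E]

theorem inv_smul_mem_of_hasSum [ContinuousSMul ℝ E] {C : Set E} (hC : Convex ℝ C)
    (hCc : IsClosed C) {u : ι → ℝ} (hu : ∀ i, 0 ≤ u i) {W : ℝ} (hW : 0 < W)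
    (huW : HasSum u W) {z : ι → E} (hz : ∀ i, z i ∈ C) {v : E}
    (hv : HasSum (fun i => u i • z i) v) : W⁻¹ • v ∈ C := by
  have hlim : Tendsto (fun s : Finset ι => s.centerMass u z) atTop (𝓝 (W⁻¹ • v)) :=
    (huW.inv₀ hW.ne').smul hv
  refine hCc.mem_of_tendsto hlim ?_
  filter_upwards [huW.eventually_const_lt hW] with s hs
  exact hC.centerMass_mem (fun i _ => hu i) hs fun i _ => hz i

theorem mem_of_hasSum_of_isExtreme [IsTopologicalAddGroup E] [ContinuousSMul ℝ E] [Nontrivial ι]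
    {C S : Set E} (hC : Convex ℝ C) (hCc : IsClosed C) (hS : IsExtreme ℝ C S) {u : ι → ℝ}
    (hu : ∀ i, 0 < u i) {W : ℝ} (huW : HasSum u W) {z : ι → E} (hz : ∀ i, z i ∈ C) {v : E}
    (hv : HasSum (fun i => u i • z i) v) (hvS : W⁻¹ • v ∈ S) (i : ι) : z i ∈ S := by
  classical
  let u' := Function.update u i 0
  have hu' : ∀ j, 0 ≤ u' j := fun j => by
    rcases eq_or_ne j i with rfl | hj
    · simp [u']
    · simpa [u', hj] using (hu j).le
  have hu'W : HasSum u' (W - u i) := by simpa [u', add_comm, sub_eq_add_neg] using huW.update i 0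
  have hv' : HasSum (fun j => u' j • z j) (v - u i • z i) := by
    have hupdate : (fun j => u' j • z j) = Function.update (fun j => u j • z j) i 0 := by
      ext j
      rcases eq_or_ne j i with rfl | hj <;> simp [u', *]
    rw [hupdate]
    simpa [add_comm, sub_eq_add_neg] using hv.update i 0
  obtain ⟨j, hj⟩ := exists_ne i
  have hrest : 0 < W - u i :=
    hasSum_lt (i := j) hu' (by simpa [u', hj] using hu j) hasSum_zero hu'W
  have hz' : (W - u i)⁻¹ • (v - u i • z i) ∈ C :=
    inv_smul_mem_of_hasSum hC hCc hu' hrest hu'W hz hv'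
  refine hS.left_mem_of_mem_openSegment (hz i) hz' hvS ?_
  refine mem_openSegment_iff_div.2 ⟨u i, W - u i, hu i, hrest, ?_⟩
  rw [add_sub_cancel, div_eq_inv_mul, div_eq_inv_mul, mul_smul, mul_smul, smul_inv_smul₀ hrest.ne',
    ← smul_add, add_sub_cancel]

/-- Convex sets admitting continuous selections, an enlargement of the class `𝒟(E)` of Michael's
*Continuous selections I*: every point of the closure missing from `K` lies in a proper closed
extreme subset of the closure. Michael requires the extreme subset to be convex as well. -/
structure IsMichaelConvex (K : Set E) : Prop where
  convex : Convex ℝ K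
  exists_isExtreme : ∀ y ∈ closure K, y ∉ K →
    ∃ S, IsExtreme ℝ (closure K) S ∧ IsClosed S ∧ y ∈ S ∧ S ≠ closure K

namespace IsMichaelConvex

theorem of_isClosed {K : Set E} (hK : Convex ℝ K) (hKc : IsClosed K) : IsMichaelConvex K :=
  ⟨hK, fun _ hy hyK => absurd (hKc.closure_subset hy) hyK⟩

theorem image {F : Type*} [AddCommGroup F] [Module ℝ F] [TopologicalSpace F] {K : Set E}
    (hK : IsMichaelConvex K) (e : E →ᵃ[ℝ] F) (he : Topology.IsClosedEmbedding e) :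
    IsMichaelConvex (e '' K) := by
  refine ⟨hK.convex.affine_image e, ?_⟩
  rw [he.closure_image_eq]
  rintro _ ⟨y, hy, rfl⟩ hyK
  obtain ⟨S, hS, hSc, hyS, hSne⟩ := hK.exists_isExtreme y hy fun h => hyK (mem_image_of_mem e h)
  refine ⟨e '' S, ⟨image_mono hS.subset, ?_⟩, he.isClosedMap S hSc, mem_image_of_mem e hyS,
    he.injective.image_injective.ne hSne⟩
  rintro _ ⟨a, ha, rfl⟩ _ ⟨b, hb, rfl⟩ _ ⟨z, hz, rfl⟩ hab
  rw [← image_openSegment, he.injective.mem_set_image] at hab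
  exact mem_image_of_mem e (hS.left_mem_of_mem_openSegment ha hb hz hab)

variable [IsTopologicalAddGroup E] [ContinuousSMul ℝ E]

theorem of_interior_nonempty {K : Set E} (hK : Convex ℝ K) (hKi : (interior K).Nonempty) :
    IsMichaelConvex K := by
  refine ⟨hK, fun y hy hyK => ⟨frontier K, ⟨frontier_subset_closure, ?_⟩, isClosed_frontier,
    ⟨hy, notMem_subset interior_subset hyK⟩, ?_⟩⟩
  · exact fun a ha b hb z hz hab => ⟨ha, fun hai =>
      hz.2 (hK.openSegment_interior_closure_subset_interior hai hb hab)⟩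
  · obtain ⟨p, hp⟩ := hKi
    exact fun h => (h.symm.subset (subset_closure (interior_subset hp))).2 hp

theorem inv_smul_mem [Nontrivial ι] {K : Set E} (hK : IsMichaelConvex K) {u : ι → ℝ}
    (hu : ∀ i, 0 < u i) {W : ℝ} (hW : 0 < W) (huW : HasSum u W) {z : ι → E}
    (hz : ∀ i, z i ∈ closure K) (hKz : K ⊆ closure (range z)) {v : E}
    (hv : HasSum (fun i => u i • z i) v) : W⁻¹ • v ∈ K := by
  by_contra hvK
  obtain ⟨S, hS, hSc, hvS, hSne⟩ := hK.exists_isExtreme _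
    (inv_smul_mem_of_hasSum hK.convex.closure isClosed_closure (fun i => (hu i).le) hW huW hz hv)
    hvK
  have hzS : range z ⊆ S := range_subset_iff.2 <|
    mem_of_hasSum_of_isExtreme hK.convex.closure isClosed_closure hS hu huW hz hv hvS
  have hKS : K ⊆ S := hKz.trans (closure_minimal hzS hSc)
  exact hSne (hS.subset.antisymm (closure_minimal hKS hSc))

theorem of_finiteDimensional {Y : Type*} [NormedAddCommGroup Y] [NormedSpace ℝ Y] {K : Set Y}
    [FiniteDimensional ℝ (affineSpan ℝ K).direction] (hK : Convex ℝ K) : IsMichaelConvex K := by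
  rcases K.eq_empty_or_nonempty with rfl | ⟨p, hp⟩
  · exact of_isClosed hK isClosed_empty
  have : Nonempty K := ⟨⟨p, hp⟩⟩
  let p' : affineSpan ℝ K := ⟨p, subset_affineSpan ℝ K hp⟩
  let e' := AffineIsometryEquiv.vaddConst ℝ p'
  let e := (affineSpan ℝ K).subtypeₐᵢ.comp e'.toAffineIsometry
  have hconv : Convex ℝ (e ⁻¹' K) := hK.affine_preimage e.toAffineMap
  have hspan : affineSpan ℝ (e ⁻¹' K) = ⊤ := by
    change affineSpan ℝ (e'.toAffineEquiv ⁻¹' (((↑) : affineSpan ℝ K → Y) ⁻¹' K)) = ⊤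
    rw [← AffineSubspace.comap_span, affineSpan_coe_preimage_eq_top, AffineSubspace.comap_top]
  have himage : e '' (e ⁻¹' K) = K := by
    refine image_preimage_eq_of_subset fun k hk => ?_
    exact ⟨e'.symm ⟨k, subset_affineSpan ℝ K hk⟩, by simp [e]⟩
  have : CompleteSpace (affineSpan ℝ K).direction := FiniteDimensional.complete ℝ _
  rw [← himage]
  exact (of_interior_nonempty hconv
    (hconv.interior_nonempty_iff_affineSpan_eq_top.2 hspan)).image e.toAffineMap
      e.isometry.isClosedEmbedding

end IsMichaelConvex

end MichaelConvex

section MichaelSelection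

theorem hasOpenCGraph_ball {X Y : Type*} [TopologicalSpace X] [PseudoMetricSpace Y] {g : X → Y}
    (hg : Continuous g) (ε : ℝ) : HasOpenCGraph fun x => Metric.ball (g x) ε :=
  isOpen_lt (continuous_snd.dist (hg.comp continuous_fst)) continuous_const

theorem hasOpenCGraph_imp {X Y : Type*} [TopologicalSpace X] [TopologicalSpace Y] {C : Set X}
    {V : Set Y} (hC : IsClosed C) (hV : IsOpen V) : HasOpenCGraph fun x => {y | x ∈ C → y ∈ V} := by
  simp only [HasOpenCGraph, mem_ofPred_eq, imp_iff_not_or]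
  exact (hC.isOpen_compl.preimage continuous_fst).union (hV.preimage continuous_snd)

variable {X Y : Type*} [TopologicalSpace X] [ParacompactSpace X] [NormedAddCommGroup Y]
  [NormedSpace ℝ Y] {Φ : X → Set Y}

section Normal

variable [NormalSpace X]

theorem exists_continuous_forall_inter_ball_nonempty (hne : ∀ x, (Φ x).Nonempty)
    (hconv : ∀ x, Convex ℝ (Φ x)) (hlhc : LowerHemicontinuous Φ) {ε : ℝ} (hε : 0 < ε) :
    ∃ g : C(X, Y), ∀ x, (Φ x ∩ Metric.ball (g x) ε).Nonempty := by
  have hlocal (x : X) : ∃ y, ∀ᶠ x' in 𝓝 x, y ∈ Metric.thickening ε (Φ x') := by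
    obtain ⟨y, hy⟩ := hne x
    refine ⟨y, (lowerHemicontinuousAt_iff.1 (hlhc x) _ Metric.isOpen_ball
      ⟨y, hy, Metric.mem_ball_self hε⟩).mono ?_⟩
    rintro x' ⟨w, hw, hwy⟩
    exact Metric.mem_thickening_iff.2 ⟨w, hw, Metric.mem_ball'.1 hwy⟩
  obtain ⟨g, hg⟩ := exists_continuous_forall_mem_convex_of_local_const
    (fun x => (hconv x).thickening ε) hlocal
  refine ⟨g, fun x => ?_⟩
  obtain ⟨w, hw, hgw⟩ := Metric.mem_thickening_iff.1 (hg x)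
  exact ⟨w, hw, Metric.mem_ball'.2 hgw⟩

theorem exists_continuous_forall_inter_ball_nonempty_near (hconv : ∀ x, Convex ℝ (Φ x))
    (hlhc : LowerHemicontinuous Φ) {ε δ : ℝ} (hδ : 0 < δ) (g : C(X, Y))
    (hg : ∀ x, (Φ x ∩ Metric.ball (g x) ε).Nonempty) :
    ∃ g' : C(X, Y), (∀ x, (Φ x ∩ Metric.ball (g' x) δ).Nonempty) ∧
      ∀ x, dist (g x) (g' x) ≤ ε + δ := by
  obtain ⟨g', hg'⟩ := exists_continuous_forall_inter_ball_nonempty hg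
    (fun x => (hconv x).inter (convex_ball _ _))
    (hlhc.inter_hasOpenCGraph (hasOpenCGraph_ball g.continuous ε)) hδ
  refine ⟨g', fun x => (hg' x).mono (inter_subset_inter_left _ inter_subset_left), fun x => ?_⟩
  obtain ⟨w, ⟨-, hwg⟩, hwg'⟩ := hg' x
  exact (dist_triangle_left _ _ w).trans (add_le_add hwg.le hwg'.le)

theorem exists_seq_continuous_forall_inter_ball_nonempty (hne : ∀ x, (Φ x).Nonempty)
    (hconv : ∀ x, Convex ℝ (Φ x)) (hlhc : LowerHemicontinuous Φ) :
    ∃ G : ℕ → C(X, Y), (∀ n x, (Φ x ∩ Metric.ball (G n x) (1 / 2 ^ n)).Nonempty) ∧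
      ∀ n x, dist (G n x) (G (n + 1) x) ≤ 4 / 2 / 2 ^ n := by
  let Approx (n : ℕ) := {g : C(X, Y) // ∀ x, (Φ x ∩ Metric.ball (g x) (1 / 2 ^ n)).Nonempty}
  have hnext (n : ℕ) (g : Approx n) :
      ∃ g' : Approx (n + 1), ∀ x, dist (g.1 x) (g'.1 x) ≤ 4 / 2 / 2 ^ n := by
    obtain ⟨g', hg', hdist⟩ := exists_continuous_forall_inter_ball_nonempty_near hconv hlhc
      (δ := 1 / 2 ^ (n + 1)) (by positivity) g.1 g.2
    have hle : (1 : ℝ) / 2 ^ n + 1 / 2 ^ (n + 1) ≤ 4 / 2 / 2 ^ n := by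
      rw [pow_succ]
      field_simp
      norm_num
    exact ⟨⟨g', hg'⟩, fun x => (hdist x).trans hle⟩
  choose next hnext using hnext
  obtain ⟨g, hg⟩ := exists_continuous_forall_inter_ball_nonempty hne hconv hlhc one_pos
  let G (n : ℕ) : Approx n := Nat.rec ⟨g, by simpa using hg⟩ next n
  exact ⟨fun n => (G n).1, fun n => (G n).2, fun n => hnext n (G n)⟩

theorem exists_continuous_forall_mem_closure [CompleteSpace Y] (hne : ∀ x, (Φ x).Nonempty)
    (hconv : ∀ x, Convex ℝ (Φ x)) (hlhc : LowerHemicontinuous Φ) :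
    ∃ g : C(X, Y), ∀ x, g x ∈ closure (Φ x) := by
  obtain ⟨G, hG, hdist⟩ := exists_seq_continuous_forall_inter_ball_nonempty hne hconv hlhc
  choose g hg using fun x => cauchySeq_tendsto_of_complete
    (cauchySeq_of_le_geometric_two fun n => hdist n x)
  have hradius (C : ℝ) : Tendsto (fun n : ℕ => C / 2 ^ n) atTop (𝓝 0) :=
    tendsto_const_nhds.div_atTop (tendsto_pow_atTop_atTop_of_one_lt one_lt_two)
  have hunif : TendstoUniformly (fun n x => G n x) g atTop := by
    refine Metric.tendstoUniformly_iff.2 fun ε hε => ?_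
    filter_upwards [(hradius 4).eventually_lt_const hε] with n hn x
    rw [dist_comm]
    exact (dist_le_of_le_geometric_two_of_tendsto (fun n => hdist n x) (hg x) n).trans_lt hn
  refine ⟨⟨g, hunif.continuous (.of_forall fun n => (G n).continuous)⟩, fun x => ?_⟩
  choose w hwΦ hwG using fun n => hG n x
  have hw : Tendsto w atTop (𝓝 (g x)) := (hg x).congr_dist <|
    squeeze_zero (fun _ => dist_nonneg) (fun n => (Metric.mem_ball'.1 (hwG n)).le) (hradius 1)
  exact mem_closure_of_tendsto hw (.of_forall hwΦ)

theorem exists_continuous_forall_mem_closure_of_forall_mem [CompleteSpace Y]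
    (hne : ∀ x, (Φ x).Nonempty) (hconv : ∀ x, Convex ℝ (Φ x)) (hlhc : LowerHemicontinuous Φ)
    {C : Set X} (hC : IsClosed C) {V : Set Y} (hV : IsOpen V) (hVconv : Convex ℝ V)
    (hCV : ∀ x ∈ C, (Φ x ∩ V).Nonempty) :
    ∃ g : C(X, Y), (∀ x, g x ∈ closure (Φ x)) ∧ ∀ x ∈ C, g x ∈ closure V := by
  obtain ⟨g, hg⟩ := exists_continuous_forall_mem_closure
    (Φ := fun x => Φ x ∩ {y | x ∈ C → y ∈ V})
    (fun x => by by_cases hx : x ∈ C <;> simp [hx, hne, hCV x])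
    (fun x => (hconv x).inter (by by_cases hx : x ∈ C <;> simp [hx, hVconv, convex_univ]))
    (hlhc.inter_hasOpenCGraph (hasOpenCGraph_imp hC hV))
  exact ⟨g, fun x => closure_mono inter_subset_left (hg x),
    fun x hx => closure_mono (fun y hy => hy.2 hx) (hg x)⟩

end Normal

section PerfectlyNormal

variable [PerfectlyNormalSpace X] [CompleteSpace Y]

theorem exists_seq_continuous_forall_mem_closure (hne : ∀ x, (Φ x).Nonempty)
    (hconv : ∀ x, Convex ℝ (Φ x)) (hlhc : LowerHemicontinuous Φ) {V : Set Y} (hV : IsOpen V)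
    (hVconv : Convex ℝ V) :
    ∃ f : ℕ → C(X, Y), (∀ n x, f n x ∈ closure (Φ x)) ∧
      ∀ x, (Φ x ∩ V).Nonempty → ∃ n, f n x ∈ closure V := by
  have hopen := lowerHemicontinuous_iff_isOpen_inter_nonempty.1 hlhc V hV
  obtain ⟨U, hU, hUeq⟩ := isGδ_iff_eq_iInter_nat.1 hopen.isClosed_compl.isGδ
  rw [← compl_inj_iff, compl_compl, compl_iInter] at hUeq
  choose f hfΦ hfV using fun n => exists_continuous_forall_mem_closure_of_forall_mem hne hconv hlhc
    (hU n).isClosed_compl hV hVconv fun x hx => hUeq.superset (mem_iUnion_of_mem n hx)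
  refine ⟨f, hfΦ, fun x hx => ?_⟩
  obtain ⟨n, hn⟩ := mem_iUnion.1 (hUeq.subset hx)
  exact ⟨n, hfV n x hn⟩

theorem exists_seq_continuous_forall_subset_closure_range [SeparableSpace Y]
    (hne : ∀ x, (Φ x).Nonempty) (hconv : ∀ x, Convex ℝ (Φ x)) (hlhc : LowerHemicontinuous Φ) :
    ∃ f : ℕ → C(X, Y), (∀ n x, f n x ∈ closure (Φ x)) ∧
      ∀ x, Φ x ⊆ closure (range fun n => f n x) := by
  obtain ⟨d, hd⟩ := exists_dense_seq Y
  choose f hfΦ hfV using fun i k : ℕ => exists_seq_continuous_forall_mem_closure hne hconv hlhc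
    (V := Metric.ball (d i) (1 / (k + 1))) Metric.isOpen_ball (convex_ball _ _)
  let e := (Denumerable.eqv (ℕ × ℕ × ℕ)).symm
  refine ⟨fun n => f (e n).1 (e n).2.1 (e n).2.2, fun n => hfΦ _ _ _, fun x y hy => ?_⟩
  refine Metric.mem_closure_range_iff.2 fun ε hε => ?_
  obtain ⟨k, hk⟩ := exists_nat_one_div_lt (half_pos hε)
  obtain ⟨i, hi⟩ := hd.exists_dist_lt y (Nat.one_div_pos_of_nat (α := ℝ) (n := k))
  obtain ⟨n, hn⟩ := hfV i k x ⟨y, hy, hi⟩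
  refine ⟨e.symm (i, k, n), ?_⟩
  have hdist : dist (f i k n x) (d i) ≤ 1 / (k + 1) :=
    Metric.closure_ball_subset_closedBall hn
  simp only [Equiv.apply_symm_apply]
  linarith [dist_triangle_right y (f i k n x) (d i)]

theorem exists_continuous_forall_mem_of_isMichaelConvex [SeparableSpace Y]
    (hne : ∀ x, (Φ x).Nonempty) (hΦ : ∀ x, IsMichaelConvex (Φ x))
    (hlhc : LowerHemicontinuous Φ) : ∃ g : C(X, Y), ∀ x, g x ∈ Φ x := by
  obtain ⟨f, hfΦ, hfdense⟩ :=
    exists_seq_continuous_forall_subset_closure_range hne (fun x => (hΦ x).convex) hlhc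
  let u (n : ℕ) (x : X) : ℝ := (1 / 2) ^ n * (1 + ‖f n x‖)⁻¹
  have hupos (n : ℕ) (x : X) : 0 < u n x := by positivity
  have hule (n : ℕ) (x : X) : ‖u n x‖ ≤ (1 / 2) ^ n := by
    rw [Real.norm_of_nonneg (hupos n x).le]
    exact mul_le_of_le_one_right (by positivity) (inv_le_one_of_one_le₀ (by simp))
  have hufle (n : ℕ) (x : X) : ‖u n x • f n x‖ ≤ (1 / 2) ^ n := by
    rw [norm_smul, Real.norm_of_nonneg (hupos n x).le, mul_assoc]
    refine mul_le_of_le_one_right (by positivity) ?_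
    exact inv_mul_le_one_of_le₀ (by simp) (by positivity)
  have hucont (n : ℕ) : Continuous (u n) :=
    continuous_const.mul ((continuous_const.add (f n).continuous.norm).inv₀ fun x =>
      (add_pos_of_pos_of_nonneg one_pos (norm_nonneg (f n x))).ne')
  have husum (x : X) : Summable fun n => u n x :=
    .of_norm_bounded summable_geometric_two fun n => hule n x
  have hWpos (x : X) : 0 < ∑' n, u n x :=
    (husum x).tsum_pos (fun n => (hupos n x).le) 0 (hupos 0 x)
  refine ⟨⟨fun x => (∑' n, u n x)⁻¹ • ∑' n, u n x • f n x, ?_⟩, fun x => ?_⟩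
  · exact ((continuous_tsum hucont summable_geometric_two hule).inv₀ fun x => (hWpos x).ne').smul
      (continuous_tsum (fun n => (hucont n).smul (f n).continuous) summable_geometric_two hufle)
  · exact (hΦ x).inv_smul_mem (hupos · x) (hWpos x) (husum x).hasSum (hfΦ · x) (hfdense x)
      (Summable.of_norm_bounded summable_geometric_two fun n => hufle n x).hasSum

end PerfectlyNormal

end MichaelSelection

section Projection

theorem exists_forall_cylinder_subset {E : ℕ → Type*} [∀ n, TopologicalSpace (E n)]
    [∀ n, DiscreteTopology (E n)] {C O : Set (∀ n, E n)} (hC : IsCompact C) (hO : IsOpen O)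
    (hCO : C ⊆ O) : ∃ k, ∀ s ∈ C, PiNat.cylinder s k ⊆ O := by
  let := PiNat.metricSpace (E := E)
  obtain ⟨δ, hδ, hδO⟩ := hC.exists_thickening_subset_open hO hCO
  obtain ⟨k, hk⟩ := exists_pow_lt_of_lt_one hδ one_half_lt_one
  refine ⟨k, fun s hs s' hs' => hδO (Metric.mem_thickening_iff.2 ⟨s, hs, ?_⟩)⟩
  exact (PiNat.mem_cylinder_iff_dist_le.1 hs').trans_lt hk

theorem exists_setOf_forall_lt_le_subset {n : ℕ → ℕ} {O : Set (ℕ → ℕ)} (hO : IsOpen O)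
    (hn : Iic n ⊆ O) : ∃ k, {s : ℕ → ℕ | ∀ i < k, s i ≤ n i} ⊆ O := by
  have hcompact : IsCompact (Iic n) := Icc_bot (a := n) ▸ isCompact_Icc
  obtain ⟨k, hk⟩ := exists_forall_cylinder_subset hcompact hO hn
  exact ⟨k, fun s hs => hk (s ⊓ n) (mem_Iic.2 inf_le_right) fun i hi =>
    (inf_eq_left.2 (hs i hi)).symm⟩

variable {X : Type*} [MeasurableSpace X]

theorem exists_lt_measure_image_inter_setOf_le (ν : Measure X) (f : (ℕ → ℕ) → X)
    {Q : Set (ℕ → ℕ)} {a : ENNReal} (ha : a < ν (f '' Q)) (k : ℕ) :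
    ∃ m, a < ν (f '' (Q ∩ {s | s k ≤ m})) := by
  have hmono : Monotone fun m => f '' (Q ∩ {s | s k ≤ m}) := fun i j hij =>
    image_mono (inter_subset_inter_right _ fun s (hs : s k ≤ i) => hs.trans hij)
  have hunion : ⋃ m, Q ∩ {s | s k ≤ m} = Q := by
    rw [← inter_iUnion, inter_eq_left]
    exact fun s _ => mem_iUnion_of_mem (s k) (by simp)
  rw [← hunion, image_iUnion, hmono.measure_iUnion] at ha
  exact lt_iSup_iff.1 ha

theorem exists_forall_lt_measure_image_setOf_forall_lt_le (ν : Measure X) (f : (ℕ → ℕ) → X)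
    {a : ENNReal} (ha : a < ν (range f)) :
    ∃ n : ℕ → ℕ, ∀ k, a < ν (f '' {s | ∀ i < k, s i ≤ n i}) := by
  choose m hm using fun (k : ℕ) (Q : {Q // a < ν (f '' Q)}) =>
    exists_lt_measure_image_inter_setOf_le ν f Q.2 k
  let Q (k : ℕ) : {Q // a < ν (f '' Q)} :=
    Nat.rec ⟨univ, by rwa [image_univ]⟩ (fun k Q => ⟨_, hm k Q⟩) k
  have hQ (k : ℕ) : (Q k).1 = {s | ∀ i < k, s i ≤ m i (Q i)} := by
    induction k with
    | zero => simp [Q]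
    | succ k ih =>
      change (Q k).1 ∩ {s | s k ≤ m k (Q k)} = _
      ext s
      simp only [ih, Nat.forall_lt_succ_right, mem_inter_iff, mem_ofPred_eq]
  exact ⟨fun k => m k (Q k), fun k => hQ k ▸ (Q k).2⟩

variable [TopologicalSpace X]

theorem innerRegularWRT_isCompact_analyticSet (ν : Measure X) [ν.OuterRegular] :
    ν.InnerRegularWRT IsCompact AnalyticSet := by
  intro A hA r hr
  rw [AnalyticSet] at hA
  rcases hA with rfl | ⟨f, hf, rfl⟩
  · simp at hr
  obtain ⟨a, hra, haν⟩ := exists_between hr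
  obtain ⟨n, hn⟩ := exists_forall_lt_measure_image_setOf_forall_lt_le ν f haν
  have hcompact : IsCompact (Iic n) := Icc_bot (a := n) ▸ isCompact_Icc
  refine ⟨f '' Iic n, image_subset_range _ _, hcompact.image hf, hra.trans_le ?_⟩
  by_contra! hlt
  obtain ⟨O, hO, hOo, hOa⟩ := (f '' Iic n).exists_isOpen_lt_of_lt a hlt
  obtain ⟨k, hk⟩ := exists_setOf_forall_lt_le_subset (hOo.preimage hf) (image_subset_iff.1 hO)
  exact ((hn k).trans_le (measure_mono (image_subset_iff.2 hk))).not_gt hOa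

theorem nullMeasurableSet_of_analyticSet_of_isFiniteMeasure [T2Space X] [OpensMeasurableSpace X]
    {ν : Measure X} [IsFiniteMeasure ν] [ν.OuterRegular] {A : Set X} (hA : AnalyticSet A) :
    NullMeasurableSet A ν := by
  choose K hKA hK hAK using fun j : ℕ =>
    (innerRegularWRT_isCompact_analyticSet ν).exists_subset_lt_add isCompact_empty hA
      (measure_ne_top ν A) (ENNReal.inv_ne_zero.2 (ENNReal.natCast_ne_top j))
  have hU : MeasurableSet (⋃ j, K j) := .iUnion fun j => (hK j).measurableSet
  have hlim : Tendsto (fun j : ℕ => ν (⋃ j, K j) + (j : ENNReal)⁻¹) atTop (𝓝 (ν (⋃ j, K j))) := by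
    simpa using tendsto_const_nhds.add ENNReal.tendsto_inv_nat_nhds_zero
  have hle : ν A ≤ ν (⋃ j, K j) := ge_of_tendsto' hlim fun j =>
    (hAK j).le.trans (by gcongr; exact subset_iUnion K j)
  exact hU.nullMeasurableSet.congr <| ae_eq_of_subset_of_measure_ge (iUnion_subset hKA) hle
    hU.nullMeasurableSet (measure_ne_top ν A)

theorem nullMeasurableSet_of_analyticSet [MetrizableSpace X] [BorelSpace X] {ν : Measure X}
    [SFinite ν] {A : Set X} (hA : AnalyticSet A) : NullMeasurableSet A ν :=
  (nullMeasurableSet_of_analyticSet_of_isFiniteMeasure (ν := ν.toFinite) hA).mono_ac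
    (absolutelyContinuous_toFinite ν)

variable {T Z : Type*} [MeasurableSpace T] [MeasurableSpace Z]

theorem exists_measurable_preimage_prodMap_eq {A : Set (T × Z)} (hA : MeasurableSet A) :
    ∃ g : T → ℕ → Bool, Measurable g ∧ ∃ B, MeasurableSet B ∧ Prod.map g id ⁻¹' B = A := by
  classical
  induction A, hA using MeasurableSpace.induction_on_inter generateFrom_prod.symm
    isPiSystem_prod with
  | empty => exact ⟨fun _ _ => false, measurable_const, ∅, .empty, rfl⟩
  | basic _ hA =>
    obtain ⟨S, hS, R, hR, rfl⟩ := hA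
    refine ⟨fun t _ => decide (t ∈ S),
      measurable_pi_lambda _ fun _ => measurable_to_bool (by simpa [preimage] using hS),
      ((· 0) ⁻¹' {true}) ×ˢ R,
      .prod (measurable_pi_apply 0 (measurableSet_singleton true)) hR, ?_⟩
    ext p
    simp
  | compl _ _ ih =>
    obtain ⟨g, hg, B, hB, rfl⟩ := ih
    exact ⟨g, hg, Bᶜ, hB.compl, rfl⟩
  | iUnion A _ _ ih =>
    choose g hg B hB hA using ih
    let row (n : ℕ) (c : ℕ → Bool) (k : ℕ) : Bool := c (Nat.pair n k)
    have hrow (n : ℕ) : Measurable (row n) := measurable_pi_lambda _ fun _ => measurable_pi_apply _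
    refine ⟨fun t k => g k.unpair.1 t k.unpair.2,
      measurable_pi_lambda _ fun k => (measurable_pi_apply _).comp (hg _),
      ⋃ n, Prod.map (row n) id ⁻¹' B n,
      .iUnion fun n => ((hrow n).prodMap measurable_id) (hB n), ?_⟩
    simp only [preimage_iUnion, ← hA, ← preimage_comp, Prod.map_comp_map, Function.comp_id]
    simp [row, Function.comp_def]

theorem nullMeasurableSet_fst_image [StandardBorelSpace Z] {μ : Measure T} [SFinite μ]
    {A : Set (T × Z)} (hA : MeasurableSet A) : NullMeasurableSet (Prod.fst '' A) μ := by
  let := upgradeStandardBorel Z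
  have : PolishSpace Bool := {}
  obtain ⟨g, hg, B, hB, rfl⟩ := exists_measurable_preimage_prodMap_eq hA
  have hfst : AnalyticSet (Prod.fst '' B) := hB.analyticSet.image_of_continuous continuous_fst
  have hpreimage : Prod.fst '' (Prod.map g id ⁻¹' B) = g ⁻¹' (Prod.fst '' B) := by
    ext t
    simp
  rw [hpreimage]
  exact (nullMeasurableSet_of_analyticSet (ν := μ.map g) hfst).preimage
    ⟨hg, Measure.AbsolutelyContinuous.rfl⟩

end Projection

section Caratheodory

variable {T Z Y : Type*}

theorem measurableSet_setOf_forall_mem [MeasurableSpace T] [MeasurableSpace Z]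
    [StandardBorelSpace Z] (μ : Measure T) [SFinite μ] [μ.IsComplete] {A : Set (T × Z)}
    (hA : MeasurableSet A) : MeasurableSet {t | ∀ x, (t, x) ∈ A} := by
  have hcompl : {t | ∀ x, (t, x) ∈ A} = (Prod.fst '' Aᶜ)ᶜ := by
    ext t
    simp
  rw [hcompl]
  exact (nullMeasurableSet_fst_image (μ := μ) hA.compl).measurable_of_complete.compl

theorem exists_pseudoMetrizableSpace_forall_isOpen [MeasurableSpace T] {ι : Type*} [Countable ι]
    {A : ι → Set T} (hA : ∀ i, MeasurableSet (A i)) :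
    ∃ _ : TopologicalSpace T, PseudoMetrizableSpace T ∧ OpensMeasurableSpace T ∧
      ∀ i, IsOpen (A i) := by
  classical
  let e (t : T) (i : ι) : Bool := decide (t ∈ A i)
  have hpreimage (i : ι) : (e · i) ⁻¹' {true} = A i := by
    ext t
    simp [e]
  have he : Measurable e :=
    measurable_pi_lambda _ fun i => measurable_to_bool ((hpreimage i).symm ▸ hA i)
  let : TopologicalSpace T := .induced e inferInstance
  have hind : IsInducing e := ⟨rfl⟩
  refine ⟨_, hind.pseudoMetrizableSpace, ⟨MeasurableSpace.generateFrom_le ?_⟩, fun i => ?_⟩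
  · rintro _ ⟨U, hU, rfl⟩
    exact he hU.measurableSet
  · rw [← hpreimage i]
    exact (isOpen_discrete _).preimage ((continuous_apply i).comp hind.continuous)

theorem lowerHemicontinuous_prod_of_isTopologicalBasis [TopologicalSpace T] [TopologicalSpace Z]
    [TopologicalSpace Y] {𝓑 : Set (Set Z)} (h𝓑 : IsTopologicalBasis 𝓑) {𝓥 : Set (Set Y)}
    (h𝓥 : IsTopologicalBasis 𝓥) {Ψ : T → Z → Set Y} (hlhc : ∀ t, LowerHemicontinuous (Ψ t))
    (hopen : ∀ B ∈ 𝓑, ∀ V ∈ 𝓥, IsOpen {t | ∀ x ∈ B, (Ψ t x ∩ V).Nonempty}) :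
    LowerHemicontinuous fun p : T × Z => Ψ p.1 p.2 := by
  rintro ⟨t, x⟩
  refine lowerHemicontinuousAt_iff.2 fun U hU ⟨y, hy, hyU⟩ => ?_
  obtain ⟨V, hV, hyV, hVU⟩ := h𝓥.exists_subset_of_mem_open hyU hU
  obtain ⟨B, hB, hxB, hBV⟩ := h𝓑.mem_nhds_iff.1 <|
    lowerHemicontinuousAt_iff.1 (hlhc t x) V (h𝓥.isOpen hV) ⟨y, hy, hyV⟩
  filter_upwards [prod_mem_nhds ((hopen B hB V hV).mem_nhds fun _ hx => hBV hx)
    ((h𝓑.isOpen hB).mem_nhds hxB)] with p hp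
  exact (hp.1 p.2 hp.2).mono (inter_subset_inter_right _ hVU)

theorem exists_caraSelection_of_continuous [MeasurableSpace T] [TopologicalSpace T]
    [OpensMeasurableSpace T] [TopologicalSpace Z] [TopologicalSpace Y] [MeasurableSpace Y]
    [BorelSpace Y] [Nonempty Y] {Ψ : T → Z → Set Y}
    {g : {p : T × Z // (Ψ p.1 p.2).Nonempty} → Y} (hg : Continuous g)
    (hgΨ : ∀ p, g p ∈ Ψ p.1.1 p.1.2) : ∃ ψ : T → Z → Y, CaraSelection Ψ ψ := by
  classical
  let ψ (t : T) (x : Z) : Y :=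
    if h : (Ψ t x).Nonempty then g ⟨(t, x), h⟩ else Classical.arbitrary Y
  have hψ {t : T} {x : Z} (h : (Ψ t x).Nonempty) : ψ t x = g ⟨(t, x), h⟩ := dif_pos h
  refine ⟨ψ, fun t x h => hψ h ▸ hgΨ ⟨(t, x), h⟩, fun x => ?_, fun t => ?_⟩
  · simp only [fun t : {t // (Ψ t x).Nonempty} => hψ t.2]
    exact (hg.comp
      ((continuous_subtype_val.prodMk continuous_const).subtype_mk fun t => t.2)).measurable
  · simp only [fun x : {x // (Ψ t x).Nonempty} => hψ x.2]
    exact hg.comp ((continuous_const.prodMk continuous_subtype_val).subtype_mk fun x => x.2)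

end Caratheodory

theorem stmt_0_general {T Z Y : Type*} [MeasurableSpace T] (μ : Measure T) [SFinite μ]
    [μ.IsComplete] [TopologicalSpace Z] [PseudoMetrizableSpace Z] [SecondCountableTopology Z]
    [MeasurableSpace Z] [OpensMeasurableSpace Z] [StandardBorelSpace Z] [NormedAddCommGroup Y]
    [NormedSpace ℝ Y] [CompleteSpace Y] [SeparableSpace Y] [MeasurableSpace Y] [BorelSpace Y]
    (Ψ : T → Z → Set Y) (hΨ : ∀ t x, IsMichaelConvex (Ψ t x)) (hmeas : JLowerMeas Ψ)
    (hlsc : ∀ t, LSCCorr (Ψ t)) : ∃ ψ : T → Z → Y, CaraSelection Ψ ψ := by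
  have : SecondCountableTopology Y := UniformSpace.secondCountable_of_separable Y
  have hmeasHit (i : countableBasis Z × countableBasis Y) :
      MeasurableSet {t | ∀ x ∈ i.1.1, (Ψ t x ∩ i.2.1).Nonempty} :=
    measurableSet_setOf_forall_mem μ
      ((measurable_snd (isOpen_of_mem_countableBasis i.1.2).measurableSet).imp
        (hmeas _ (isOpen_of_mem_countableBasis i.2.2)))
  obtain ⟨_, _, _, hopen⟩ := exists_pseudoMetrizableSpace_forall_isOpen hmeasHit
  have hlhc : LowerHemicontinuous fun p : T × Z => Ψ p.1 p.2 :=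
    lowerHemicontinuous_prod_of_isTopologicalBasis (isBasis_countableBasis Z)
      (isBasis_countableBasis Y) (fun t => lowerHemicontinuous_iff_isOpen_inter_nonempty.2 (hlsc t))
      fun B hB V hV => hopen (⟨B, hB⟩, ⟨V, hV⟩)
  let := pseudoMetrizableSpacePseudoMetric (T × Z)
  obtain ⟨g, hg⟩ := exists_continuous_forall_mem_of_isMichaelConvex
    (Φ := fun p : {p : T × Z // (Ψ p.1 p.2).Nonempty} => Ψ p.1.1 p.1.2) (fun p => p.2)
    (fun p => hΨ _ _) (hlhc.comp continuous_subtype_val)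
  exact exists_caraSelection_of_continuous g.continuous hg

/-- **Kim–Prikry–Yannelis Carathéodory-type selection theorem.**
Let `(T,𝒯,μ)` be a complete finite measure space, `Y` a separable Banach space, and `Z` a
complete separable metric space.  If `Ψ : T × Z → 2^Y` is a convex (possibly empty) valued
correspondence that is jointly lower measurable and lower-semicontinuous in the second
variable, and either `Y` is finite-dimensional, or `Ψ` is closed-valued, or
`int Ψ(t,x) ≠ ∅` on `U_Ψ`, then `Ψ` admits a Carathéodory-type selection on `U_Ψ`. -/
theorem stmt_0 {T Z Y : Type*} [MeasurableSpace T] (μ : Measure T) [IsFiniteMeasure μ]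
    (hcomp : μ.IsComplete)
    [MetricSpace Z] [CompleteSpace Z] [SeparableSpace Z] [MeasurableSpace Z] [BorelSpace Z]
    [NormedAddCommGroup Y] [NormedSpace ℝ Y] [CompleteSpace Y] [SeparableSpace Y]
    [MeasurableSpace Y] [BorelSpace Y]
    (Ψ : T → Z → Set Y)
    (hconv : ∀ t x, Convex ℝ (Ψ t x))
    (hmeas : JLowerMeas Ψ)
    (hlsc : ∀ t, LSCCorr (Ψ t))
    (hone : FiniteDimensional ℝ Y ∨ (∀ t x, IsClosed (Ψ t x)) ∨
      ∀ t x, (Ψ t x).Nonempty → (interior (Ψ t x)).Nonempty) :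
    ∃ ψ : T → Z → Y, CaraSelection Ψ ψ := by
  have : SecondCountableTopology Z := UniformSpace.secondCountable_of_separable Z
  have : PolishSpace Z := {}
  refine stmt_0_general μ Ψ (fun t x => ?_) hmeas hlsc
  rcases hone with hfin | hclosed | hint
  · exact .of_finiteDimensional (hconv t x)
  · exact .of_isClosed (hconv t x) (hclosed t x)
  · rcases (Ψ t x).eq_empty_or_nonempty with hempty | hne
    · exact .of_isClosed (hconv t x) (hempty ▸ isClosed_empty)
    · exact .of_interior_nonempty (hconv t x) (hint t x hne)
end
end

section
/- Let Y be a normed linear space and let B be a convex subset of Y. If B is closed, or B has an interior point, or B is finite-dimensional (contained in a finite-dimensional subspace), then 𝕀(cl B) ⊆ B. -/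
open Set

noncomputable section

/-- `S` is a supporting set of the closed convex set `C`: a closed convex proper subset of `C`
such that whenever an interior point of a segment lying in `C` belongs to `S`, the whole
segment lies in `S`. -/
def SupportingSet {Y : Type*} [NormedAddCommGroup Y] [NormedSpace ℝ Y] (C S : Set Y) : Prop :=
  IsClosed S ∧ Convex ℝ S ∧ S ⊆ C ∧ S ≠ C ∧
    ∀ a b : Y, segment ℝ a b ⊆ C → (∃ w ∈ openSegment ℝ a b, w ∈ S) → segment ℝ a b ⊆ S

/-- `𝕀(C)`: the set of points of `C` lying in no supporting set of `C`. -/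
def MichaelI {Y : Type*} [NormedAddCommGroup Y] [NormedSpace ℝ Y] (C : Set Y) : Set Y :=
  {y ∈ C | ∀ S : Set Y, SupportingSet C S → y ∉ S}

/-!
A continuous linear functional that attains its supremum over a closed convex set `C` at a point of
`𝕀(C)` is constant on `C`, since otherwise the face it exposes would be a supporting set through
that point. Hence `𝕀(cl B) ⊆ B` as soon as every point of `cl B \ B` can be separated from `B` by a
functional that is not constant on `B`. If `B` has nonempty relative interior and its affine span is
closed, then `cl B` lies in that span, and such a functional is obtained by separating inside the
span and extending by Hahn–Banach. A finite-dimensional convex set is of this kind.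
-/

section SupportingSets

variable {Y : Type*} [NormedAddCommGroup Y] [NormedSpace ℝ Y] {C S : Set Y} {y : Y}

theorem supportingSet_of_isExtreme (h : IsExtreme ℝ C S) (hclosed : IsClosed S) (hconv : Convex ℝ S)
    (hne : S ≠ C) : SupportingSet C S := by
  refine ⟨hclosed, hconv, h.subset, hne, fun a b hab ⟨w, hw, hwS⟩ ↦ ?_⟩
  have ha : a ∈ C := hab (left_mem_segment ℝ a b)
  have hb : b ∈ C := hab (right_mem_segment ℝ a b)
  exact hconv.segment_subset (h.left_mem_of_mem_openSegment ha hb hwS hw)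
    (h.right_mem_of_mem_openSegment ha hb hwS hw)

theorem supportingSet_of_isExposed (hclosed : IsClosed C) (hconv : Convex ℝ C)
    (h : IsExposed ℝ C S) (hne : S ≠ C) : SupportingSet C S :=
  supportingSet_of_isExtreme h.isExtreme (h.isClosed hclosed) (h.convex hconv) hne

theorem eqOn_const_of_mem_michaelI (hclosed : IsClosed C) (hconv : Convex ℝ C)
    (hy : y ∈ MichaelI C) {f : StrongDual ℝ Y} (hf : IsMaxOn f C y) :
    EqOn f (fun _ ↦ f y) C := by
  have hface : f.toExposed C = C := by
    by_contra hne
    exact hy.2 _ (supportingSet_of_isExposed hclosed hconv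
      ContinuousLinearMap.toExposed.isExposed hne) ⟨hy.1, hf⟩
  intro x hx
  rw [← hface] at hx
  exact (hf hx.1).antisymm (hx.2 y hy.1)

end SupportingSets

section Separation

variable {E : Type*} [AddCommGroup E] [TopologicalSpace E] [IsTopologicalAddGroup E] [Module ℝ E]
  [ContinuousSMul ℝ E] {s : Set E} {x : E}

theorem exists_strongDual_le_and_exists_lt_of_notMem_interior (hs : Convex ℝ s)
    (hint : (interior s).Nonempty) (hx : x ∉ interior s) :
    ∃ f : StrongDual ℝ E, (∀ a ∈ s, f a ≤ f x) ∧ ∃ a ∈ s, f a < f x := by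
  obtain ⟨f, hf⟩ := geometric_hahn_banach_open_point hs.interior isOpen_interior hx
  obtain ⟨a, ha⟩ := hint
  have hsub : s ⊆ closure (interior s) := by
    rw [hs.closure_interior_eq_closure_of_nonempty_interior ⟨a, ha⟩]
    exact subset_closure
  refine ⟨f, fun b hb ↦ ?_, a, interior_subset ha, hf a ha⟩
  exact le_on_closure (fun c hc ↦ (hf c hc).le) f.continuous.continuousOn continuousOn_const
    (hsub hb)

theorem exists_strongDual_le_and_exists_lt_of_notMem_intrinsicInterior [LocallyConvexSpace ℝ E]
    (hs : Convex ℝ s) (hint : (intrinsicInterior ℝ s).Nonempty) (hspan : x ∈ affineSpan ℝ s)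
    (hx : x ∉ intrinsicInterior ℝ s) :
    ∃ f : StrongDual ℝ E, (∀ a ∈ s, f a ≤ f x) ∧ ∃ a ∈ s, f a < f x := by
  obtain ⟨-, p, hp, -⟩ := hint
  have : Nonempty (affineSpan ℝ s) := ⟨p⟩
  let V := (affineSpan ℝ s).direction
  let e : V ≃ₜ affineSpan ℝ s := Homeomorph.vaddConst p
  let t : Set V := e ⁻¹' ((↑) ⁻¹' s)
  have ht : Convex ℝ t := (hs.translate_preimage_left (p : E)).linear_preimage V.subtype
  have hinterior : interior t = e ⁻¹' interior ((↑) ⁻¹' s) := (e.preimage_interior _).symm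
  have hmem {a : E} (ha : a ∈ affineSpan ℝ s) : a - p ∈ V :=
    AffineSubspace.vsub_mem_direction ha p.2
  have htint : (interior t).Nonempty := ⟨0, by simpa [hinterior, e] using hp⟩
  have hxt : (⟨x - p, hmem hspan⟩ : V) ∉ interior t := fun h ↦
    hx ⟨_, hinterior ▸ h, sub_add_cancel x p⟩
  obtain ⟨g, hle, b, hb, hlt⟩ :=
    exists_strongDual_le_and_exists_lt_of_notMem_interior ht htint hxt
  obtain ⟨f, hf⟩ := StrongDual.exists_extension V g
  simp only [← hf, map_sub] at hle hlt
  refine ⟨f, fun a ha ↦ ?_, b + p, hb, by rw [map_add]; linarith⟩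
  have hat : (⟨a - p, hmem (subset_affineSpan ℝ s ha)⟩ : V) ∈ t := by
    change a - p + p ∈ s
    rwa [sub_add_cancel]
  simpa using hle _ hat

end Separation

section AffineSpan

theorem vectorSpan_le_of_subset_submodule {𝕜 V : Type*} [Ring 𝕜] [AddCommGroup V] [Module 𝕜 V]
    {s : Set V} {W : Submodule 𝕜 V} (h : s ⊆ W) : vectorSpan 𝕜 s ≤ W :=
  Submodule.span_le.2 <| vsub_subset_iff.2 fun _ ha _ hb ↦ W.sub_mem (h ha) (h hb)

variable {E : Type*} [NormedAddCommGroup E] [NormedSpace ℝ E] {s : Set E}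

theorem isClosed_affineSpan_of_interior_nonempty (h : (interior s).Nonempty) :
    IsClosed (affineSpan ℝ s : Set E) := by
  have htop : affineSpan ℝ s = ⊤ :=
    affineSpan_eq_top_of_nonempty_interior (h.mono (interior_mono (subset_convexHull ℝ s)))
  rw [htop]
  exact isClosed_univ

theorem isClosed_affineSpan_of_finiteDimensional [FiniteDimensional ℝ (vectorSpan ℝ s)] :
    IsClosed (affineSpan ℝ s : Set E) := by
  rw [← AffineSubspace.isClosed_direction_iff, direction_affineSpan]
  exact Submodule.closed_of_finiteDimensional _

theorem intrinsicInterior_nonempty_of_finiteDimensional [FiniteDimensional ℝ (vectorSpan ℝ s)]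
    (hs : Convex ℝ s) (hne : s.Nonempty) : (intrinsicInterior ℝ s).Nonempty := by
  obtain ⟨p, hp⟩ := hne
  let φ : vectorSpan ℝ s →ᵃⁱ[ℝ] E :=
    (AffineIsometryEquiv.vaddConst ℝ p).toAffineIsometry.comp
      (vectorSpan ℝ s).subtypeₗᵢ.toAffineIsometry
  have hrange : s ⊆ range φ := fun a ha ↦
    ⟨⟨a - p, vsub_mem_vectorSpan ℝ ha hp⟩, by simp [φ]⟩
  have himage : φ '' (φ ⁻¹' s) = s := image_preimage_eq_of_subset hrange
  have hpre : (φ ⁻¹' s).Nonempty := ⟨0, by simpa [φ] using hp⟩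
  rw [← himage, φ.intrinsicInterior_image, image_nonempty]
  exact hpre.intrinsicInterior (hs.affine_preimage φ.toAffineMap)

end AffineSpan

theorem michaelI_closure_subset_of_intrinsicInterior_nonempty {Y : Type*} [NormedAddCommGroup Y]
    [NormedSpace ℝ Y] {B : Set Y} (hconv : Convex ℝ B) (hspan : IsClosed (affineSpan ℝ B : Set Y))
    (hint : (intrinsicInterior ℝ B).Nonempty) : MichaelI (closure B) ⊆ B := by
  intro y hy
  by_contra hyB
  have hyspan : y ∈ affineSpan ℝ B := closure_minimal (subset_affineSpan ℝ B) hspan hy.1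
  obtain ⟨f, hle, b, hb, hlt⟩ := exists_strongDual_le_and_exists_lt_of_notMem_intrinsicInterior
    hconv hint hyspan (fun h ↦ hyB (intrinsicInterior_subset h))
  have hmax : IsMaxOn f (closure B) y := fun x hx ↦
    le_on_closure hle f.continuous.continuousOn continuousOn_const hx
  exact hlt.ne (eqOn_const_of_mem_michaelI isClosed_closure hconv.closure hy hmax
    (subset_closure hb))

theorem stmt_2_general {Y : Type*} [NormedAddCommGroup Y] [NormedSpace ℝ Y]
    (B : Set Y) (hconv : Convex ℝ B)
    (h : IsClosed B ∨
      IsClosed (affineSpan ℝ B : Set Y) ∧ (B.Nonempty → (intrinsicInterior ℝ B).Nonempty)) :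
    MichaelI (closure B) ⊆ B := by
  intro y hy
  rcases h with hclosed | ⟨hspan, hint⟩
  · exact hclosed.closure_eq ▸ hy.1
  · have hne : B.Nonempty := closure_nonempty_iff.1 ⟨y, hy.1⟩
    exact michaelI_closure_subset_of_intrinsicInterior_nonempty hconv hspan (hint hne) hy

/-- **Michael's lemma.** If a convex subset `B` of a normed linear space is closed, or has an
interior point, or is finite-dimensional, then `𝕀(cl B) ⊆ B`. -/
theorem stmt_2 {Y : Type*} [NormedAddCommGroup Y] [NormedSpace ℝ Y]
    (B : Set Y) (hconv : Convex ℝ B)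
    (h : IsClosed B ∨ (interior B).Nonempty ∨
      ∃ s : Submodule ℝ Y, FiniteDimensional ℝ s ∧ B ⊆ (s : Set Y)) :
    MichaelI (closure B) ⊆ B := by
  refine stmt_2_general B hconv (h.imp_right ?_)
  rintro (hint | ⟨s, _, hBs⟩)
  · exact ⟨isClosed_affineSpan_of_interior_nonempty hint,
      fun _ ↦ hint.mono interior_subset_intrinsicInterior⟩
  · have := Submodule.finiteDimensional_of_le (vectorSpan_le_of_subset_submodule hBs)
    exact ⟨isClosed_affineSpan_of_finiteDimensional,
      intrinsicInterior_nonempty_of_finiteDimensional hconv⟩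
end
end

section
/- Let Z and Y be metric spaces, let B ⊆ Y be compact, and let G: Z → 2^Y be a continuous correspondence with nonempty compact values such that G(z) ⊆ B for all z ∈ Z. For each nonempty compact set C ⊆ Z, the union ⋃_{z∈C} G(z) is a closed (hence compact) subset of Y, and the map N: 𝒦₀(Z) → 𝒦₀(Y) defined by N(C) = ⋃_{z∈C} G(z) is continuous when both 𝒦₀(Z) and 𝒦₀(Y) are endowed with the Hausdorff metric topology. -/
open Set TopologicalSpace

noncomputable section

/-!
The Vietoris topology on sets is generated by `{A | A ⊆ V}` and `{A | (A ∩ V).Nonempty}` for `V`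
open, so a correspondence is continuous exactly when it is continuous as a map into it. Since
`⋃ z ∈ C, G z` is contained in `V` iff `C ⊆ {z | G z ⊆ V}`, and meets `V` iff `C` meets
`{z | (G z ∩ V).Nonempty}`, the map `C ↦ ⋃ z ∈ C, G z` pulls these generators back to generators
and is Vietoris continuous. On nonempty compact sets the Vietoris topology is the Hausdorff metric
topology.
-/

section Correspondence

variable {X Y : Type*} [TopologicalSpace X] [TopologicalSpace Y] {Φ : X → Set Y}

theorem USCCorr.isCompact_biUnion (hΦ : USCCorr Φ) (hcpt : ∀ x, IsCompact (Φ x))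
    {K : Set X} (hK : IsCompact K) : IsCompact (⋃ x ∈ K, Φ x) := by
  refine isCompact_of_finite_subcover fun {ι} U hU hcover => ?_
  let W (s : Finset ι) : Set X := {x | Φ x ⊆ ⋃ i ∈ s, U i}
  have hW_open (s : Finset ι) : IsOpen (W s) := hΦ _ (isOpen_biUnion fun i _ => hU i)
  have hW_cover : K ⊆ ⋃ s, W s := fun x hx =>
    mem_iUnion.2 ((hcpt x).elim_finite_subcover U hU ((subset_biUnion_of_mem hx).trans hcover))
  have hW_mono : Monotone W := fun _ _ hst _ hx =>
    hx.trans (biUnion_subset_biUnion_left hst)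
  obtain ⟨s, hs⟩ := hK.elim_directed_cover W hW_open hW_cover hW_mono.directed_le
  exact ⟨s, iUnion₂_subset hs⟩

attribute [local instance] TopologicalSpace.vietoris

theorem continuous_vietoris_iff_lscCorr_and_uscCorr :
    Continuous Φ ↔ LSCCorr Φ ∧ USCCorr Φ := by
  constructor
  · exact fun h => ⟨fun V hV => (vietoris.isOpen_inter_nonempty_of_isOpen hV).preimage h,
      fun V hV => hV.powerset_vietoris.preimage h⟩
  · rintro ⟨hlsc, husc⟩
    refine continuous_generateFrom_iff.2 ?_
    rintro _ (⟨V, hV, rfl⟩ | ⟨V, hV, rfl⟩)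
    · exact husc V hV
    · exact hlsc V hV

theorem LSCCorr.biUnion (hΦ : LSCCorr Φ) : LSCCorr fun A : Set X => ⋃ x ∈ A, Φ x := by
  intro V hV
  have hmeets (A : Set X) :
      ((⋃ x ∈ A, Φ x) ∩ V).Nonempty ↔ (A ∩ {x | (Φ x ∩ V).Nonempty}).Nonempty := by
    rw [iUnion₂_inter, nonempty_biUnion]
    rfl
  simp only [hmeets]
  exact vietoris.isOpen_inter_nonempty_of_isOpen (hΦ V hV)

theorem USCCorr.biUnion (hΦ : USCCorr Φ) : USCCorr fun A : Set X => ⋃ x ∈ A, Φ x := by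
  intro V hV
  simp only [iUnion₂_subset_iff]
  exact (hΦ V hV).powerset_vietoris

theorem continuous_biUnion_vietoris (hΦ : Continuous Φ) :
    Continuous fun A : Set X => ⋃ x ∈ A, Φ x := by
  rw [continuous_vietoris_iff_lscCorr_and_uscCorr] at hΦ ⊢
  exact ⟨hΦ.1.biUnion, hΦ.2.biUnion⟩

/-- The map `K ↦ ⋃ x ∈ K, Φ x` on nonempty compact sets induced by an upper-semicontinuous
correspondence `Φ` with nonempty compact values. -/
def USCCorr.unionMap (hΦ : USCCorr Φ) (hne : ∀ x, (Φ x).Nonempty) (hcpt : ∀ x, IsCompact (Φ x))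
    (K : NonemptyCompacts X) : NonemptyCompacts Y where
  carrier := ⋃ x ∈ (K : Set X), Φ x
  isCompact' := hΦ.isCompact_biUnion hcpt K.isCompact
  nonempty' := nonempty_biUnion.2 (K.nonempty.imp fun x hx => ⟨hx, hne x⟩)

theorem USCCorr.continuous_unionMap (husc : USCCorr Φ) (hlsc : LSCCorr Φ)
    (hne : ∀ x, (Φ x).Nonempty) (hcpt : ∀ x, IsCompact (Φ x)) :
    Continuous (husc.unionMap hne hcpt) := by
  have hΦ : Continuous Φ := continuous_vietoris_iff_lscCorr_and_uscCorr.2 ⟨hlsc, husc⟩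
  exact NonemptyCompacts.isEmbedding_coe.continuous_iff.2
    ((continuous_biUnion_vietoris hΦ).comp NonemptyCompacts.continuous_coe)

end Correspondence

theorem stmt_6_general {Z Y : Type*} [TopologicalSpace Z] [TopologicalSpace Y]
    (G : Z → Set Y) (hlsc : LSCCorr G) (husc : USCCorr G)
    (hne : ∀ z, (G z).Nonempty) (hcpt : ∀ z, IsCompact (G z)) :
    (∀ C : Set Z, IsCompact C → IsCompact (⋃ z ∈ C, G z)) ∧
    ∃ N : NonemptyCompacts Z → NonemptyCompacts Y,
      (∀ C : NonemptyCompacts Z, (N C : Set Y) = ⋃ z ∈ (C : Set Z), G z) ∧ Continuous N :=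
  ⟨fun _ hC => husc.isCompact_biUnion hcpt hC,
    husc.unionMap hne hcpt, fun _ => rfl, husc.continuous_unionMap hlsc hne hcpt⟩

/-- Let `Z, Y` be metric spaces, `B ⊆ Y` compact, and `G : Z → 2^Y` a continuous
correspondence with nonempty compact values contained in `B`.  Then `⋃_{z ∈ C} G z` is closed
for every nonempty compact `C ⊆ Z`, and `N(C) = ⋃_{z ∈ C} G z` defines a continuous map
between the spaces of nonempty compact subsets endowed with the Hausdorff metric topology. -/
theorem stmt_6 {Z Y : Type*} [MetricSpace Z] [MetricSpace Y]
    (B : Set Y) (hB : IsCompact B)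
    (G : Z → Set Y) (hlsc : LSCCorr G) (husc : USCCorr G)
    (hne : ∀ z, (G z).Nonempty) (hcpt : ∀ z, IsCompact (G z)) (hsub : ∀ z, G z ⊆ B) :
    (∀ C : Set Z, C.Nonempty → IsCompact C → IsClosed (⋃ z ∈ C, G z)) ∧
    ∃ N : NonemptyCompacts Z → NonemptyCompacts Y,
      (∀ C : NonemptyCompacts Z, (N C : Set Y) = ⋃ z ∈ (C : Set Z), G z) ∧ Continuous N := by
  obtain ⟨hunion, hN⟩ := stmt_6_general G hlsc husc hne hcpt
  exact ⟨fun C _ hC => (hunion C hC).isClosed, hN⟩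
end
end

section
/- Let (Ω,𝓕,μ) be a complete finite measure space, I a finite or countable index set, and for each i ∈ I let X_i be a nonempty compact subset of a separable Banach space Y, with X = Π_{i∈I} X_i. Fix i ∈ I and let u_i: Ω×X → ℝ be such that u_i(ω,·): X → ℝ is continuous for each ω ∈ Ω and u_i(·,x): Ω → ℝ is measurable for each x ∈ X. Then the correspondence P_i^{u_i}: Ω×X → 2^{X_i} defined by P_i^{u_i}(ω,x) = {y_i ∈ X_i : u_i(ω, y_i, x_{-i}) − u_i(ω, x) > 0} is jointly lower measurable, P_i^{u_i}(ω,·) has open graph in X × X_i (hence is lower-semicontinuous) for each ω ∈ Ω, and consequently P_i^{u_i} satisfies the strong continuous inclusion property. -/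
open MeasureTheory Set TopologicalSpace

noncomputable section

/-- The preference correspondence induced by a family of payoff functions:
`y ∈ PrefCorr X v i ω x` iff `y ∈ Xᵢ` and `v i (ω, (y, x₋ᵢ)) − v i (ω, x) > 0`. -/
def PrefCorr {Ω Y I : Type*} [DecidableEq I] (X : I → Set Y)
    (v : (i : I) → Ω → ((j : I) → X j) → ℝ) (i : I) (ω : Ω) (x : (j : I) → X j) : Set Y :=
  {y : Y | ∃ hy : y ∈ X i, 0 < v i ω (Function.update x i ⟨y, hy⟩) - v i ω x}

/-!
The strict inequality defining `Pᵢ` gives it an open graph in `X × Xᵢ`, hence open values in `Xᵢ`,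
and `uᵢ`, being Carathéodory, is jointly measurable. A countable dense subset of `Xᵢ` then detects
whether `Pᵢ(ω,x)` meets an open set, which is joint lower measurability.

For the strong continuous inclusion property take `F_z = Pᵢ` for every `z`. What has to be seen is
that convex hulls inherit lower semicontinuity and lower measurability. A convex combination is
continuous in its points, so `con Φ(x)` meets an open `V` iff `Φ(x)` meets each member of some
finite family of basic open sets from which every choice of points has a convex combination
in `V`. Hence `{x | con Φ(x) ∩ V ≠ ∅}` is a union of finite intersections of sets
`{x | Φ(x) ∩ U ≠ ∅}`, and the union is countable when the topology has a countable basis.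
-/

section ConvexHull

/-- The family `𝒰` forces convex hulls to meet `V`: the convex hull of a set that meets every
member of `𝒰` meets `V`. The sets `{x | con Φ(x) ∩ V ≠ ∅}` are described through such families. -/
def ForcesConvexHullMeet (𝕜 : Type*) {E : Type*} [Semiring 𝕜] [PartialOrder 𝕜] [AddCommMonoid E]
    [Module 𝕜 E] (𝒰 : Set (Set E)) (V : Set E) : Prop :=
  ∀ A : Set E, (∀ U ∈ 𝒰, (A ∩ U).Nonempty) → (convexHull 𝕜 A ∩ V).Nonempty

variable (𝕜 : Type*) {E : Type*} [Field 𝕜] [LinearOrder 𝕜] [IsStrictOrderedRing 𝕜]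
  [AddCommGroup E] [Module 𝕜 E] [TopologicalSpace E] [ContinuousAdd E] [ContinuousConstSMul 𝕜 E]
  {B : Set (Set E)} {V : Set E}

theorem exists_finite_forcesConvexHullMeet (hB : IsTopologicalBasis B) (hV : IsOpen V) {A : Set E}
    (hAV : (convexHull 𝕜 A ∩ V).Nonempty) :
    ∃ 𝒰, (𝒰.Finite ∧ 𝒰 ⊆ B) ∧ ForcesConvexHullMeet 𝕜 𝒰 V ∧ ∀ U ∈ 𝒰, (A ∩ U).Nonempty := by
  obtain ⟨_, hxA, hxV⟩ := hAV
  obtain ⟨ι, _, w, y, hw₀, hw₁, hyA, rfl⟩ := mem_convexHull_iff_exists_fintype.1 hxA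
  have hcomb : Continuous fun z : ι → E => ∑ k, w k • z k :=
    continuous_finsetSum _ fun k _ => (continuous_apply k).const_smul (w k)
  obtain ⟨O, hO, hOV⟩ := isOpen_pi_iff'.1 (hV.preimage hcomb) y hxV
  choose U hUB hyU hUO using fun k => hB.exists_subset_of_mem_open (hO k).2 (hO k).1
  refine ⟨range U, ⟨finite_range U, range_subset_iff.2 hUB⟩, fun A' hA' => ?_,
    forall_mem_range.2 fun k => ⟨y k, hyA k, hyU k⟩⟩
  choose z hzA' hzU using forall_mem_range.1 hA'
  exact ⟨∑ k, w k • z k, mem_convexHull_of_exists_fintype w z hw₀ hw₁ hzA' rfl,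
    hOV fun k _ => hUO k (hzU k)⟩

theorem setOf_convexHull_inter_nonempty {Z : Type*} (hB : IsTopologicalBasis B) (hV : IsOpen V)
    (Φ : Z → Set E) :
    {x | (convexHull 𝕜 (Φ x) ∩ V).Nonempty} =
      ⋃ 𝒰 ∈ {𝒰 : Set (Set E) | (𝒰.Finite ∧ 𝒰 ⊆ B) ∧ ForcesConvexHullMeet 𝕜 𝒰 V},
        ⋂ U ∈ 𝒰, {x | (Φ x ∩ U).Nonempty} := by
  ext x
  simp only [mem_ofPred_eq, mem_iUnion, mem_iInter, exists_prop]
  constructor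
  · intro hx
    obtain ⟨𝒰, h𝒰, hforce, hmeet⟩ := exists_finite_forcesConvexHullMeet 𝕜 hB hV hx
    exact ⟨𝒰, ⟨h𝒰, hforce⟩, hmeet⟩
  · rintro ⟨𝒰, ⟨-, hforce⟩, hmeet⟩
    exact hforce (Φ x) hmeet

theorem LSCCorr.convexHull {Z : Type*} [TopologicalSpace Z] {Φ : Z → Set E} (hΦ : LSCCorr Φ) :
    LSCCorr fun x => convexHull 𝕜 (Φ x) := by
  intro V hV
  rw [setOf_convexHull_inter_nonempty 𝕜 isTopologicalBasis_opens hV]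
  exact isOpen_biUnion fun 𝒰 h𝒰 => h𝒰.1.1.isOpen_biInter fun U hU => hΦ U (h𝒰.1.2 hU)

theorem LowerMeasCorr.convexHull {T : Type*} [MeasurableSpace T] [SecondCountableTopology E]
    {Φ : T → Set E} (hΦ : LowerMeasCorr Φ) :
    LowerMeasCorr fun t => convexHull 𝕜 (Φ t) := by
  intro V hV
  have hB := isBasis_countableBasis E
  rw [setOf_convexHull_inter_nonempty 𝕜 hB hV]
  have hcount : {𝒰 : Set (Set E) | (𝒰.Finite ∧ 𝒰 ⊆ countableBasis E) ∧
      ForcesConvexHullMeet 𝕜 𝒰 V}.Countable :=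
    (countable_ofPred_finite_subset (countable_countableBasis E)).mono fun _ h => h.1
  exact .biUnion hcount fun 𝒰 h𝒰 =>
    .biInter h𝒰.1.1.countable fun U hU => hΦ U (hB.isOpen (h𝒰.1.2 hU))

end ConvexHull

section Correspondence

variable {T Z Y : Type*}

theorem LSCCorr.lscCorrOn [TopologicalSpace Z] [TopologicalSpace Y] {Φ : Z → Set Y}
    (hΦ : LSCCorr Φ) (O : Set Z) : LSCCorrOn Φ O :=
  fun V hV => (hΦ V hV).preimage continuous_subtype_val

theorem LSCCorr.isOpen_setOf_nonempty [TopologicalSpace Z] [TopologicalSpace Y] {Φ : Z → Set Y}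
    (hΦ : LSCCorr Φ) : IsOpen {x | (Φ x).Nonempty} := by
  simpa only [inter_univ] using hΦ univ isOpen_univ

theorem LSCCorr.of_isOpen_graph [TopologicalSpace Z] [TopologicalSpace Y] {S : Set Y}
    {Φ : Z → Set Y} (hΦS : ∀ x, Φ x ⊆ S) (hgraph : IsOpen {p : Z × S | (p.2 : Y) ∈ Φ p.1}) :
    LSCCorr Φ := by
  intro V hV
  have hproj : {x | (Φ x ∩ V).Nonempty} =
      Prod.fst '' ({p : Z × S | (p.2 : Y) ∈ Φ p.1} ∩ {p | (p.2 : Y) ∈ V}) := by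
    ext x
    constructor
    · rintro ⟨y, hy, hyV⟩
      exact ⟨(x, ⟨y, hΦS x hy⟩), ⟨hy, hyV⟩, rfl⟩
    · rintro ⟨⟨_, y⟩, ⟨hy, hyV⟩, rfl⟩
      exact ⟨y, hy, hyV⟩
  rw [hproj]
  exact isOpenMap_fst _
    (hgraph.inter (hV.preimage (continuous_subtype_val.comp continuous_snd)))

theorem LowerMeasCorr.of_isOpen_of_measurableSet [MeasurableSpace T] [TopologicalSpace Y]
    {S : Set Y} [SeparableSpace S] {Φ : T → Set Y} (hΦS : ∀ t, Φ t ⊆ S)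
    (hopen : ∀ t, IsOpen {y : S | (y : Y) ∈ Φ t})
    (hmeas : ∀ y : S, MeasurableSet {t | (y : Y) ∈ Φ t}) :
    LowerMeasCorr Φ := by
  intro V hV
  obtain ⟨D, hDcount, hDdense⟩ := exists_countable_dense S
  have hunion : {t | (Φ t ∩ V).Nonempty} =
      ⋃ y ∈ {y : S | y ∈ D ∧ (y : Y) ∈ V}, {t | (y : Y) ∈ Φ t} := by
    ext t
    simp only [mem_ofPred_eq, mem_iUnion, exists_prop]
    constructor
    · rintro ⟨y, hy, hyV⟩
      obtain ⟨d, ⟨hdΦ, hdV⟩, hdD⟩ := hDdense.inter_open_nonempty _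
        ((hopen t).inter (hV.preimage continuous_subtype_val)) ⟨⟨y, hΦS t hy⟩, hy, hyV⟩
      exact ⟨d, ⟨hdD, hdV⟩, hdΦ⟩
    · rintro ⟨d, ⟨-, hdV⟩, hdΦ⟩
      exact ⟨d, hdΦ, hdV⟩
  rw [hunion]
  exact .biUnion (hDcount.mono fun _ h => h.1) fun y _ => hmeas y

theorem StrongContinuousInclusion.of_jLowerMeas_of_lscCorr [MeasurableSpace T]
    [TopologicalSpace Z] [MeasurableSpace Z] [NormedAddCommGroup Y] [NormedSpace ℝ Y]
    [SecondCountableTopology Y] {Φ : T → Z → Set Y} (hmeas : JLowerMeas Φ)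
    (hlsc : ∀ t, LSCCorr (Φ t)) : StrongContinuousInclusion Φ := by
  have hconv : ∀ t, LSCCorr fun x => convexHull ℝ (Φ t x) := fun t => (hlsc t).convexHull ℝ
  have hconvMeas : JLowerMeas fun t x => convexHull ℝ (Φ t x) :=
    LowerMeasCorr.convexHull ℝ (Φ := fun p : T × Z => Φ p.1 p.2) hmeas
  refine ⟨fun _ => Φ, fun _ t => {x | (Φ t x).Nonempty}, ⟨?_, ?_, ?_⟩, fun _ => hconvMeas,
    Or.inl fun _ _ => rfl⟩
  · exact fun z t hz => ⟨(hlsc t).isOpen_setOf_nonempty, hz, fun x hx => ⟨hx, Subset.rfl⟩⟩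
  · exact fun z t _ => (hconv t).lscCorrOn _
  · exact fun z t _ => hconv t

end Correspondence

section PrefCorr

variable {Ω Y I : Type*} [DecidableEq I] {X : I → Set Y} {i : I}
  {u : (j : I) → Ω → ((j : I) → X j) → ℝ}

theorem prefCorr_subset (ω : Ω) (x : (j : I) → X j) : PrefCorr X u i ω x ⊆ X i :=
  fun _ hy => hy.1

theorem coe_mem_prefCorr {ω : Ω} {x : (j : I) → X j} {y : X i} :
    (y : Y) ∈ PrefCorr X u i ω x ↔ u i ω x < u i ω (Function.update x i y) := by
  simp [PrefCorr]

theorem measurableSet_setOf_mem_prefCorr [MeasurableSpace Ω] [MeasurableSpace Y]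
    (hu : Measurable fun p : Ω × ((j : I) → X j) => u i p.1 p.2) (y : X i) :
    MeasurableSet {p : Ω × ((j : I) → X j) | (y : Y) ∈ PrefCorr X u i p.1 p.2} := by
  simp only [coe_mem_prefCorr]
  exact measurableSet_lt hu
    (hu.comp (measurable_fst.prodMk (measurable_update_left.comp measurable_snd)))

theorem isOpen_graph_prefCorr [TopologicalSpace Y] {ω : Ω} (hu : Continuous (u i ω)) :
    IsOpen {p : ((j : I) → X j) × X i | (p.2 : Y) ∈ PrefCorr X u i ω p.1} := by
  simp only [coe_mem_prefCorr]
  exact isOpen_lt (hu.comp continuous_fst) (hu.comp (continuous_fst.update i continuous_snd))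

theorem jLowerMeas_prefCorr [MeasurableSpace Ω] [Countable I] [TopologicalSpace Y]
    [MetrizableSpace Y] [SecondCountableTopology Y] [MeasurableSpace Y] [OpensMeasurableSpace Y]
    (hucont : ∀ ω, Continuous (u i ω))
    (humeas : ∀ x, Measurable fun ω => u i ω x) : JLowerMeas (PrefCorr X u i) := by
  have hujoint : Measurable fun p : Ω × ((j : I) → X j) => u i p.1 p.2 :=
    (measurable_uncurry_of_continuous_of_measurable (u := fun x ω => u i ω x) hucont
      humeas).comp measurable_swap
  exact LowerMeasCorr.of_isOpen_of_measurableSet (fun p => prefCorr_subset p.1 p.2)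
    (fun p => (isOpen_graph_prefCorr (hucont p.1)).preimage (.prodMk_right p.2))
    (measurableSet_setOf_mem_prefCorr hujoint)

end PrefCorr

theorem stmt_13_general {Ω Y I : Type*} [MeasurableSpace Ω] [Countable I] [DecidableEq I]
    [NormedAddCommGroup Y] [NormedSpace ℝ Y] [SeparableSpace Y] [MeasurableSpace Y]
    [OpensMeasurableSpace Y]
    (X : I → Set Y) (i : I) (u : (j : I) → Ω → ((j : I) → X j) → ℝ)
    (hucont : ∀ ω, Continuous (u i ω)) (humeas : ∀ x, Measurable fun ω => u i ω x) :
    JLowerMeas (PrefCorr X u i) ∧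
    (∀ ω, IsOpen {p : ((j : I) → X j) × X i | (p.2 : Y) ∈ PrefCorr X u i ω p.1}) ∧
    (∀ ω, LSCCorr (PrefCorr X u i ω)) ∧
    StrongContinuousInclusion (PrefCorr X u i) := by
  have : SecondCountableTopology Y := UniformSpace.secondCountable_of_separable Y
  have hmeas : JLowerMeas (PrefCorr X u i) := jLowerMeas_prefCorr hucont humeas
  have hgraph := fun ω => isOpen_graph_prefCorr (hucont ω)
  have hlsc : ∀ ω, LSCCorr (PrefCorr X u i ω) :=
    fun ω => .of_isOpen_graph (prefCorr_subset ω) (hgraph ω)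
  exact ⟨hmeas, hgraph, hlsc, .of_jLowerMeas_of_lscCorr hmeas hlsc⟩

/-- If `uᵢ(ω,·)` is continuous for each `ω` and `uᵢ(·,x)` is measurable for each `x`, then
`Pᵢ^{uᵢ}` is jointly lower measurable, `Pᵢ^{uᵢ}(ω,·)` has open graph in `X × Xᵢ` (hence is
lower-semicontinuous) for each `ω`, and consequently `Pᵢ^{uᵢ}` satisfies the strong
continuous inclusion property. -/
theorem stmt_13 {Ω Y I : Type*} [MeasurableSpace Ω] (μ : Measure Ω) [IsFiniteMeasure μ]
    (hcomp : μ.IsComplete) [Countable I] [DecidableEq I]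
    [NormedAddCommGroup Y] [NormedSpace ℝ Y] [CompleteSpace Y] [SeparableSpace Y]
    [MeasurableSpace Y] [BorelSpace Y]
    (X : I → Set Y)
    (hXne : ∀ i, (X i).Nonempty) (hXcpt : ∀ i, IsCompact (X i))
    (i : I) (u : (j : I) → Ω → ((j : I) → X j) → ℝ)
    (hucont : ∀ ω, Continuous (u i ω))
    (humeas : ∀ x, Measurable fun ω => u i ω x) :
    JLowerMeas (PrefCorr X u i) ∧
    (∀ ω, IsOpen {p : ((j : I) → X j) × X i | (p.2 : Y) ∈ PrefCorr X u i ω p.1}) ∧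
    (∀ ω, LSCCorr (PrefCorr X u i ω)) ∧
    StrongContinuousInclusion (PrefCorr X u i) :=
  stmt_13_general X i u hucont humeas
end
end
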